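/- arXiv:1704.07564 — 3 statements merged into one kernel-verified Lean document; each statement's English description precedes it below -/
import Mathlib

section
/- For any QCQ channel F(ρ) = Σ_k ρ_k Tr(M_k ρ) on a d-dimensional Hilbert space, the average fidelity ∫ ⟨ψ|F(|ψ⟩⟨ψ|)|ψ⟩ dψ over the uniform measure on pure states is at most 2/(d+1), and this bound is attained (e.g., by projective measurement in an orthonormal basis followed by repreparation of the corresponding basis state). -/
open MeasureTheory Matrix ComplexOrder

/-- A QCQ (measure-and-prepare, entanglement-breaking) channel. -/
def IsQCQ {d : ℕ}
    (Φ : Matrix (Fin d) (Fin d) ℂ →ₗ[ℂ] Matrix (Fin d) (Fin d) ℂ) : Prop :=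
  ∃ (m : ℕ) (ρs Ms : Fin m → Matrix (Fin d) (Fin d) ℂ),
    (∀ k, (ρs k).PosSemidef ∧ (ρs k).trace = 1) ∧
    (∀ k, (Ms k).PosSemidef) ∧ (∑ k, Ms k = 1) ∧
    (∀ X, Φ X = ∑ k, (Ms k * X).trace • ρs k)

open scoped InnerProductSpace

open scoped MatrixOrder in
theorem Matrix.PosSemidef.exists_sum_norm_inner_sq {d : ℕ} {A : Matrix (Fin d) (Fin d) ℂ}
    (hA : A.PosSemidef) :
    ∃ w : Fin d → EuclideanSpace ℂ (Fin d),
      (∀ ψ : EuclideanSpace ℂ (Fin d),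
        star (ψ : Fin d → ℂ) ⬝ᵥ A.mulVec ψ = ((∑ i, ‖⟪w i, ψ⟫_ℂ‖ ^ 2 : ℝ) : ℂ)) ∧
      A.trace = ((∑ i, ‖w i‖ ^ 2 : ℝ) : ℂ) := by
  obtain ⟨B, rfl⟩ := CStarAlgebra.nonneg_iff_eq_star_mul_self.mp hA.nonneg
  rw [star_eq_conjTranspose]
  refine ⟨fun i => WithLp.toLp 2 (star (B i)), fun ψ => ?_, ?_⟩
  · rw [← mulVec_mulVec, dotProduct_mulVec, vecMul_conjTranspose, star_star, dotProduct]
    push_cast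
    refine Finset.sum_congr rfl fun i _ => ?_
    rw [EuclideanSpace.inner_eq_star_dotProduct, star_star, dotProduct_comm, Pi.star_apply,
      Complex.star_def, Complex.conj_mul']
    rfl
  · simp only [EuclideanSpace.norm_sq_eq, trace, diag, mul_apply, conjTranspose_apply]
    push_cast
    rw [Finset.sum_comm]
    refine Finset.sum_congr rfl fun i _ => Finset.sum_congr rfl fun j _ => ?_
    simp [Complex.conj_mul']

section Sphere

variable {d : ℕ} [MeasurableSpace (EuclideanSpace ℂ (Fin d))]
  [BorelSpace (EuclideanSpace ℂ (Fin d))] {μ : Measure (EuclideanSpace ℂ (Fin d))}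

theorem integrable_norm_inner_sq_mul [IsProbabilityMeasure μ]
    (hsphere : μ {ψ : EuclideanSpace ℂ (Fin d) | ‖ψ‖ = 1}ᶜ = 0)
    (v w : EuclideanSpace ℂ (Fin d)) :
    Integrable (fun ψ => ‖⟪v, ψ⟫_ℂ‖ ^ 2 * ‖⟪w, ψ⟫_ℂ‖ ^ 2) μ := by
  refine Integrable.of_bound (C := ‖v‖ ^ 2 * ‖w‖ ^ 2)
    (Continuous.aestronglyMeasurable (by fun_prop)) ?_
  filter_upwards [show ∀ᵐ ψ ∂μ, ‖ψ‖ = 1 from hsphere] with ψ hψ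
  rw [Real.norm_of_nonneg (by positivity)]
  have h (u : EuclideanSpace ℂ (Fin d)) : ‖⟪u, ψ⟫_ℂ‖ ≤ ‖u‖ := by
    simpa [hψ] using norm_inner_le_norm (𝕜 := ℂ) u ψ
  gcongr <;> exact h _

theorem integrable_norm_inner_pow_four [IsProbabilityMeasure μ]
    (hsphere : μ {ψ : EuclideanSpace ℂ (Fin d) | ‖ψ‖ = 1}ᶜ = 0)
    (v : EuclideanSpace ℂ (Fin d)) : Integrable (fun ψ => ‖⟪v, ψ⟫_ℂ‖ ^ 4) μ := by
  simpa only [← pow_add] using integrable_norm_inner_sq_mul hsphere v v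

theorem integral_norm_inner_orthonormalBasis_pow_four
    (hinv : ∀ U ∈ Matrix.unitaryGroup (Fin d) ℂ,
      μ.map (fun ψ : EuclideanSpace ℂ (Fin d) =>
        ((WithLp.equiv 2 (Fin d → ℂ)).symm
          (U.mulVec ((WithLp.equiv 2 (Fin d → ℂ)) ψ)))) = μ)
    (b : OrthonormalBasis (Fin d) ℂ (EuclideanSpace ℂ (Fin d))) (i : Fin d) :
    ∫ ψ, ‖⟪b i, ψ⟫_ℂ‖ ^ 4 ∂μ = ∫ ψ : EuclideanSpace ℂ (Fin d), ‖ψ i‖ ^ 4 ∂μ := by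
  let U : Matrix (Fin d) (Fin d) ℂ := of fun i j => star (b i j)
  have hU : U ∈ Matrix.unitaryGroup (Fin d) ℂ := by
    rw [mem_unitaryGroup_iff]
    ext i j
    have := orthonormal_iff_ite.mp b.orthonormal i j
    rw [EuclideanSpace.inner_eq_star_dotProduct, dotProduct_comm] at this
    simpa [U, mul_apply, star_apply, one_apply, dotProduct] using this
  have hcont : Continuous (fun ψ : EuclideanSpace ℂ (Fin d) =>
      ((WithLp.equiv 2 (Fin d → ℂ)).symm (U.mulVec ((WithLp.equiv 2 (Fin d → ℂ)) ψ)))) :=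
    (PiLp.continuous_toLp 2 _).comp
      (Continuous.matrix_mulVec continuous_const (PiLp.continuous_ofLp 2 _))
  conv_rhs => rw [← hinv U hU]
  rw [integral_map hcont.measurable.aemeasurable
    (Continuous.aestronglyMeasurable (by fun_prop))]
  refine integral_congr_ae (.of_forall fun ψ => ?_)
  simp only
  rw [EuclideanSpace.inner_eq_star_dotProduct, dotProduct_comm]
  rfl

theorem integral_norm_inner_pow_four
    (hinv : ∀ U ∈ Matrix.unitaryGroup (Fin d) ℂ,
      μ.map (fun ψ : EuclideanSpace ℂ (Fin d) =>
        ((WithLp.equiv 2 (Fin d → ℂ)).symm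
          (U.mulVec ((WithLp.equiv 2 (Fin d → ℂ)) ψ)))) = μ)
    (v : EuclideanSpace ℂ (Fin d)) (i : Fin d) :
    ∫ ψ, ‖⟪v, ψ⟫_ℂ‖ ^ 4 ∂μ = ‖v‖ ^ 4 * ∫ ψ : EuclideanSpace ℂ (Fin d), ‖ψ i‖ ^ 4 ∂μ := by
  rcases eq_or_ne v 0 with rfl | hv
  · simp
  have hv' : ‖v‖ ≠ 0 := norm_ne_zero_iff.mpr hv
  set u : EuclideanSpace ℂ (Fin d) := ((‖v‖ : ℂ)⁻¹) • v with hu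
  have hu1 : ‖u‖ = 1 := by simp [hu, norm_smul, hv']
  have hort : Orthonormal ℂ (Set.domRestrict {i} fun _ : Fin d => u) :=
    ⟨fun _ => hu1, fun a b hab => (hab (Subsingleton.elim a b)).elim⟩
  obtain ⟨b, hb⟩ := hort.exists_orthonormalBasis_extension_of_card_eq (by simp)
  rw [← integral_norm_inner_orthonormalBasis_pow_four hinv b i, hb i rfl,
    ← integral_const_mul]
  congr 1 with ψ
  rw [hu, inner_smul_left, norm_mul, ← mul_pow]
  simp [hv']

theorem Complex.sum_norm_add_I_pow_mul_pow_four (x y : ℂ) :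
    ‖x + y‖ ^ 4 + ‖x - y‖ ^ 4 + ‖x + Complex.I * y‖ ^ 4 + ‖x - Complex.I * y‖ ^ 4
      = 4 * (‖x‖ ^ 4 + ‖y‖ ^ 4 + 4 * (‖x‖ ^ 2 * ‖y‖ ^ 2)) := by
  have h (z : ℂ) : ‖z‖ ^ 4 = (z.re * z.re + z.im * z.im) ^ 2 := by
    rw [← Complex.normSq_apply, Complex.normSq_eq_norm_sq]; ring
  simp only [h, ← Complex.normSq_eq_norm_sq, Complex.normSq_apply]
  simp
  ring

theorem integral_norm_sq_mul_norm_sq_of_ne [IsProbabilityMeasure μ]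
    (hsphere : μ {ψ : EuclideanSpace ℂ (Fin d) | ‖ψ‖ = 1}ᶜ = 0)
    (hinv : ∀ U ∈ Matrix.unitaryGroup (Fin d) ℂ,
      μ.map (fun ψ : EuclideanSpace ℂ (Fin d) =>
        ((WithLp.equiv 2 (Fin d → ℂ)).symm
          (U.mulVec ((WithLp.equiv 2 (Fin d → ℂ)) ψ)))) = μ)
    (i : Fin d) {a b : Fin d} (hab : a ≠ b) :
    2 * ∫ ψ : EuclideanSpace ℂ (Fin d), ‖ψ a‖ ^ 2 * ‖ψ b‖ ^ 2 ∂μ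
      = ∫ ψ : EuclideanSpace ℂ (Fin d), ‖ψ i‖ ^ 4 ∂μ := by
  let e (j : Fin d) : EuclideanSpace ℂ (Fin d) := EuclideanSpace.single j 1
  have he (j : Fin d) (ψ : EuclideanSpace ℂ (Fin d)) : ⟪e j, ψ⟫_ℂ = ψ j := by
    simp [e, EuclideanSpace.inner_single_left]
  have hnorm (c : ℂ) (hc : ‖c‖ = 1) : ‖e a + c • e b‖ ^ 4 = 4 := by
    have h : ‖e a + c • e b‖ * ‖e a + c • e b‖ = 2 := by
      rw [norm_add_sq_eq_norm_sq_add_norm_sq_of_inner_eq_zero (𝕜 := ℂ) _ _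
        (by simp [he, e, hab])]
      simp [norm_smul, hc, e]; norm_num
    calc _ = (‖e a + c • e b‖ * ‖e a + c • e b‖) ^ 2 := by ring
      _ = 4 := by rw [h]; norm_num
  have hint (v : EuclideanSpace ℂ (Fin d)) := integrable_norm_inner_pow_four hsphere v
  have hval (v : EuclideanSpace ℂ (Fin d)) := integral_norm_inner_pow_four hinv v i
  have hsum : ∫ ψ, (‖⟪e a + (1 : ℂ) • e b, ψ⟫_ℂ‖ ^ 4 + ‖⟪e a + (-1 : ℂ) • e b, ψ⟫_ℂ‖ ^ 4
        + ‖⟪e a + (-Complex.I) • e b, ψ⟫_ℂ‖ ^ 4 + ‖⟪e a + Complex.I • e b, ψ⟫_ℂ‖ ^ 4) ∂μ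
      = ∫ ψ, 4 * (‖⟪e a, ψ⟫_ℂ‖ ^ 4 + ‖⟪e b, ψ⟫_ℂ‖ ^ 4
        + 4 * (‖⟪e a, ψ⟫_ℂ‖ ^ 2 * ‖⟪e b, ψ⟫_ℂ‖ ^ 2)) ∂μ := by
    congr 1 with ψ
    rw [← Complex.sum_norm_add_I_pow_mul_pow_four]
    simp [inner_smul_left, sub_eq_add_neg, mul_comm]
  have hab2 := integrable_norm_inner_sq_mul hsphere (e a) (e b)
  rw [integral_add (((hint _).fun_add (hint _)).fun_add (hint _)) (hint _),
    integral_add ((hint _).fun_add (hint _)) (hint _), integral_add (hint _) (hint _),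
    integral_const_mul, integral_add ((hint _).fun_add (hint _)) (hab2.const_mul 4),
    integral_add (hint _) (hint _), integral_const_mul] at hsum
  simp only [hval] at hsum
  rw [hnorm 1 (by simp), hnorm (-1) (by simp), hnorm (-Complex.I) (by simp),
    hnorm Complex.I (by simp)] at hsum
  simp only [he] at hsum
  simp only [e, PiLp.norm_single, norm_one, one_pow, one_mul] at hsum
  linarith

theorem integral_norm_apply_pow_four [IsProbabilityMeasure μ]
    (hsphere : μ {ψ : EuclideanSpace ℂ (Fin d) | ‖ψ‖ = 1}ᶜ = 0)
    (hinv : ∀ U ∈ Matrix.unitaryGroup (Fin d) ℂ,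
      μ.map (fun ψ : EuclideanSpace ℂ (Fin d) =>
        ((WithLp.equiv 2 (Fin d → ℂ)).symm
          (U.mulVec ((WithLp.equiv 2 (Fin d → ℂ)) ψ)))) = μ)
    (i : Fin d) :
    ∫ ψ : EuclideanSpace ℂ (Fin d), ‖ψ i‖ ^ 4 ∂μ = 2 / (d * (d + 1)) := by
  set α := ∫ ψ : EuclideanSpace ℂ (Fin d), ‖ψ i‖ ^ 4 ∂μ with hα
  have hmom (a b : Fin d) : ∫ ψ : EuclideanSpace ℂ (Fin d), ‖ψ a‖ ^ 2 * ‖ψ b‖ ^ 2 ∂μ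
      = α / 2 + if a = b then α / 2 else 0 := by
    split_ifs with hab
    · subst hab
      have := integral_norm_inner_pow_four hinv (EuclideanSpace.single a 1) i
      simp only [EuclideanSpace.inner_single_left, PiLp.norm_single, map_one,
        one_mul, norm_one, one_pow, ← hα] at this
      simp only [← pow_add]
      rw [this]; ring
    · have := integral_norm_sq_mul_norm_sq_of_ne hsphere hinv i hab
      linarith
  have hint (a b : Fin d) :
      Integrable (fun ψ : EuclideanSpace ℂ (Fin d) => ‖ψ a‖ ^ 2 * ‖ψ b‖ ^ 2) μ := by
    simpa [EuclideanSpace.inner_single_left] using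
      integrable_norm_inner_sq_mul hsphere (EuclideanSpace.single a 1)
      (EuclideanSpace.single b 1)
  have htotal : ∫ ψ : EuclideanSpace ℂ (Fin d), ∑ a, ∑ b, ‖ψ a‖ ^ 2 * ‖ψ b‖ ^ 2 ∂μ = 1 := by
    rw [integral_congr_ae (g := fun _ => (1 : ℝ)) ?_]
    · simp
    filter_upwards [show ∀ᵐ ψ ∂μ, ‖ψ‖ = 1 from hsphere] with ψ hψ
    rw [← Finset.sum_mul_sum, ← EuclideanSpace.norm_sq_eq, hψ]
    norm_num
  rw [integral_finsetSum _ fun a _ => integrable_finsetSum _ fun b _ => hint a b] at htotal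
  simp only [integral_finsetSum _ fun b _ => hint _ b, hmom, Finset.sum_add_distrib,
    Finset.sum_ite_eq, Finset.mem_univ, if_true, Finset.sum_const, Finset.card_univ,
    Fintype.card_fin, nsmul_eq_mul] at htotal
  have hd : (0 : ℝ) < d := by exact_mod_cast i.pos
  rw [eq_div_iff (by positivity)]
  linarith

theorem integral_norm_inner_sq_mul_le [IsProbabilityMeasure μ]
    (hsphere : μ {ψ : EuclideanSpace ℂ (Fin d) | ‖ψ‖ = 1}ᶜ = 0)
    (hinv : ∀ U ∈ Matrix.unitaryGroup (Fin d) ℂ,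
      μ.map (fun ψ : EuclideanSpace ℂ (Fin d) =>
        ((WithLp.equiv 2 (Fin d → ℂ)).symm
          (U.mulVec ((WithLp.equiv 2 (Fin d → ℂ)) ψ)))) = μ)
    (hd : 1 ≤ d) (v w : EuclideanSpace ℂ (Fin d)) :
    ∫ ψ, ‖⟪v, ψ⟫_ℂ‖ ^ 2 * ‖⟪w, ψ⟫_ℂ‖ ^ 2 ∂μ
      ≤ 2 / (d * (d + 1)) * (‖v‖ ^ 2 * ‖w‖ ^ 2) := by
  rcases eq_or_ne v 0 with rfl | hv
  · simp
  rcases eq_or_ne w 0 with rfl | hw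
  · simp
  have hv' : 0 < ‖v‖ := norm_pos_iff.mpr hv
  have hw' : 0 < ‖w‖ := norm_pos_iff.mpr hw
  have hval (u : EuclideanSpace ℂ (Fin d)) :
      ∫ ψ, ‖⟪u, ψ⟫_ℂ‖ ^ 4 ∂μ = ‖u‖ ^ 4 * (2 / (d * (d + 1))) := by
    rw [integral_norm_inner_pow_four hinv u ⟨0, hd⟩,
      integral_norm_apply_pow_four hsphere hinv]
  have hint (u : EuclideanSpace ℂ (Fin d)) := integrable_norm_inner_pow_four hsphere u
  have hle := integral_mono (μ := μ)
    (f := fun ψ => (2 * ‖v‖ ^ 2 * ‖w‖ ^ 2) * (‖⟪v, ψ⟫_ℂ‖ ^ 2 * ‖⟪w, ψ⟫_ℂ‖ ^ 2))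
    (g := fun ψ => ‖w‖ ^ 4 * ‖⟪v, ψ⟫_ℂ‖ ^ 4 + ‖v‖ ^ 4 * ‖⟪w, ψ⟫_ℂ‖ ^ 4)
    ((integrable_norm_inner_sq_mul hsphere v w).const_mul _)
    (((hint v).const_mul _).add ((hint w).const_mul _)) (fun ψ => by
      dsimp only
      linarith [sq_nonneg (‖w‖ ^ 2 * ‖⟪v, ψ⟫_ℂ‖ ^ 2 - ‖v‖ ^ 2 * ‖⟪w, ψ⟫_ℂ‖ ^ 2)])
  rw [integral_const_mul, integral_add ((hint v).const_mul _) ((hint w).const_mul _),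
    integral_const_mul, integral_const_mul, hval, hval] at hle
  refine le_of_mul_le_mul_left (hle.trans_eq ?_) (by positivity : 0 < 2 * ‖v‖ ^ 2 * ‖w‖ ^ 2)
  ring

end Sphere

theorem Matrix.trace_mul_vecMulVec_star {d : ℕ} (M : Matrix (Fin d) (Fin d) ℂ)
    (x : Fin d → ℂ) : (M * vecMulVec x (star x)).trace = star x ⬝ᵥ M.mulVec x := by
  rw [mul_vecMulVec, trace_vecMulVec, dotProduct_comm]

theorem dotProduct_sum_smul_mulVec {d m : ℕ} (ρs Ms : Fin m → Matrix (Fin d) (Fin d) ℂ)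
    (x : Fin d → ℂ) :
    star x ⬝ᵥ (∑ k, (Ms k * vecMulVec x (star x)).trace • ρs k).mulVec x
      = ∑ k, (star x ⬝ᵥ (Ms k).mulVec x) * (star x ⬝ᵥ (ρs k).mulVec x) := by
  simp only [sum_mulVec, dotProduct_sum, smul_mulVec, dotProduct_smul, smul_eq_mul,
    trace_mul_vecMulVec_star]

/-- for any QCQ channel on `ℂ^d` the average fidelity over pure
    states (w.r.t. the normalized unitarily invariant measure on the unit
    sphere) is at most `2/(d+1)`, and the bound is attained by some QCQ channel. -/
theorem stmt5 (d : ℕ) (hd : 1 ≤ d)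
    [MeasurableSpace (EuclideanSpace ℂ (Fin d))] [BorelSpace (EuclideanSpace ℂ (Fin d))]
    (μ : Measure (EuclideanSpace ℂ (Fin d))) [IsProbabilityMeasure μ]
    (hsphere : μ {ψ : EuclideanSpace ℂ (Fin d) | ‖ψ‖ = 1}ᶜ = 0)
    (hinv : ∀ U ∈ Matrix.unitaryGroup (Fin d) ℂ,
      μ.map (fun ψ : EuclideanSpace ℂ (Fin d) =>
        ((WithLp.equiv 2 (Fin d → ℂ)).symm
          (U.mulVec ((WithLp.equiv 2 (Fin d → ℂ)) ψ)))) = μ) :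
    (∀ F : Matrix (Fin d) (Fin d) ℂ →ₗ[ℂ] Matrix (Fin d) (Fin d) ℂ, IsQCQ F →
      (∫ ψ : EuclideanSpace ℂ (Fin d),
          (star (ψ : Fin d → ℂ)) ⬝ᵥ
            (F (Matrix.vecMulVec (ψ : Fin d → ℂ) (star (ψ : Fin d → ℂ)))).mulVec ψ ∂μ).re
        ≤ 2 / ((d : ℝ) + 1)) ∧
    (∃ F : Matrix (Fin d) (Fin d) ℂ →ₗ[ℂ] Matrix (Fin d) (Fin d) ℂ, IsQCQ F ∧
      (∫ ψ : EuclideanSpace ℂ (Fin d),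
          (star (ψ : Fin d → ℂ)) ⬝ᵥ
            (F (Matrix.vecMulVec (ψ : Fin d → ℂ) (star (ψ : Fin d → ℂ)))).mulVec ψ ∂μ)
        = 2 / ((d : ℂ) + 1)) := by
  constructor
  · rintro F ⟨m, ρs, Ms, hρ, hM, hsum, hF⟩
    choose v hv hvtr using fun k => (hρ k).1.exists_sum_norm_inner_sq
    choose w hw hwtr using fun k => (hM k).exists_sum_norm_inner_sq
    have hv1 (k : Fin m) : ∑ j, ‖v k j‖ ^ 2 = 1 := by
      exact_mod_cast (hvtr k).symm.trans (hρ k).2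
    have hwd : ∑ k, ∑ i, ‖w k i‖ ^ 2 = d := by
      have := congrArg trace hsum
      simp only [trace_sum, hwtr, trace_one, Fintype.card_fin] at this
      exact_mod_cast this
    have hfun (ψ : EuclideanSpace ℂ (Fin d)) : star (ψ : Fin d → ℂ) ⬝ᵥ
        (F (vecMulVec (ψ : Fin d → ℂ) (star (ψ : Fin d → ℂ)))).mulVec ψ
        = ((∑ k, ∑ i, ∑ j, ‖⟪w k i, ψ⟫_ℂ‖ ^ 2 * ‖⟪v k j, ψ⟫_ℂ‖ ^ 2 : ℝ) : ℂ) := by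
      rw [hF, dotProduct_sum_smul_mulVec]
      simp only [hv, hw, ← Finset.sum_mul_sum, Complex.ofReal_sum, Complex.ofReal_mul]
    have hint (k i j) := integrable_norm_inner_sq_mul hsphere (w k i) (v k j)
    simp only [hfun]
    rw [integral_complex_ofReal, Complex.ofReal_re, integral_finsetSum _ fun k _ =>
      integrable_finsetSum _ fun i _ => integrable_finsetSum _ fun j _ => hint k i j]
    calc _ ≤ ∑ k, ∑ i, ∑ j, 2 / ((d : ℝ) * (d + 1)) * (‖w k i‖ ^ 2 * ‖v k j‖ ^ 2) := by
          refine Finset.sum_le_sum fun k _ => ?_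
          rw [integral_finsetSum _ fun i _ => integrable_finsetSum _ fun j _ => hint k i j]
          refine Finset.sum_le_sum fun i _ => ?_
          rw [integral_finsetSum _ fun j _ => hint k i j]
          exact Finset.sum_le_sum fun j _ =>
            integral_norm_inner_sq_mul_le hsphere hinv hd _ _
      _ = 2 / ((d : ℝ) + 1) := by
          simp only [← Finset.mul_sum, hv1, mul_one, hwd]
          have : (0 : ℝ) < d := by exact_mod_cast hd
          field_simp
  · let P (k : Fin d) : Matrix (Fin d) (Fin d) ℂ := diagonal (Pi.single k 1)
    have hP (k : Fin d) : (P k).PosSemidef :=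
      PosSemidef.diagonal (Pi.single_nonneg.mpr zero_le_one)
    let F : Matrix (Fin d) (Fin d) ℂ →ₗ[ℂ] Matrix (Fin d) (Fin d) ℂ :=
      ∑ k, (traceLinearMap (Fin d) ℂ ℂ ∘ₗ LinearMap.mulLeft ℂ (P k)).smulRight (P k)
    have hF (X) : F X = ∑ k, (P k * X).trace • P k := by
      simp [F, LinearMap.sum_apply]
    refine ⟨F, ⟨d, P, P, fun k => ⟨hP k, by simp [P, trace_diagonal]⟩, hP, ?_, hF⟩, ?_⟩
    · ext i j
      simp [P, Matrix.sum_apply, diagonal_apply, one_apply, Pi.single_apply]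
    have hfun (ψ : EuclideanSpace ℂ (Fin d)) : star (ψ : Fin d → ℂ) ⬝ᵥ
        (F (vecMulVec (ψ : Fin d → ℂ) (star (ψ : Fin d → ℂ)))).mulVec ψ
        = ((∑ k, ‖ψ k‖ ^ 4 : ℝ) : ℂ) := by
      rw [hF, dotProduct_sum_smul_mulVec]
      push_cast
      refine Finset.sum_congr rfl fun k _ => ?_
      have : star (ψ : Fin d → ℂ) ⬝ᵥ (P k).mulVec ψ = (‖ψ k‖ : ℂ) ^ 2 := by
        simp [P, dotProduct, mulVec_diagonal, Pi.single_apply, Complex.conj_mul']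
      rw [this]; ring
    simp only [hfun]
    rw [integral_complex_ofReal, integral_finsetSum _ fun k _ => by
      simpa [EuclideanSpace.inner_single_left] using
        integrable_norm_inner_pow_four hsphere (EuclideanSpace.single k 1)]
    simp only [integral_norm_apply_pow_four hsphere hinv, Finset.sum_const, Finset.card_univ,
      Fintype.card_fin, nsmul_eq_mul]
    push_cast
    have hd' : (d : ℂ) ≠ 0 := by exact_mod_cast (by lia : d ≠ 0)
    have hd1 : (d : ℂ) + 1 ≠ 0 := by exact_mod_cast d.succ_ne_zero
    field_simp
end

section
/- For the depolarizing channel N(ρ) = (1−ε)ρ + ε (Tr ρ) I/d on a d-dimensional Hilbert space, the image of the maximally entangled state |Ψ⟩ = (1/√d) Σ_i |ii⟩ under id ⊗ N equals (1−ε)|Ψ⟩⟨Ψ| + ε I/d², and this state is separable if and only if ε ≥ d/(d+1). -/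
open Matrix ComplexOrder Kronecker

/-- `id_n ⊗ Φ` acting on matrices over `Fin n × Fin d`. -/
noncomputable def applyBlocks {d : ℕ} (n : ℕ)
    (Φ : Matrix (Fin d) (Fin d) ℂ →ₗ[ℂ] Matrix (Fin d) (Fin d) ℂ)
    (M : Matrix (Fin n × Fin d) (Fin n × Fin d) ℂ) :
    Matrix (Fin n × Fin d) (Fin n × Fin d) ℂ :=
  Matrix.of fun p q => Φ (Matrix.of fun i j => M (p.1, i) (q.1, j)) p.2 q.2

/-- The depolarizing channel `N(ρ) = (1−ε)ρ + (ε/d)(Tr ρ) I`. -/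
noncomputable def depol (d : ℕ) (ε : ℝ) :
    Matrix (Fin d) (Fin d) ℂ →ₗ[ℂ] Matrix (Fin d) (Fin d) ℂ :=
  ((1 - ε : ℝ) : ℂ) • LinearMap.id +
    ((ε : ℂ) / d) • (Matrix.traceLinearMap (Fin d) ℂ ℂ).smulRight 1

/-- The maximally entangled unit vector `|Ψ⟩ = (1/√d) Σ_i |ii⟩`. -/
noncomputable def maxEnt (d : ℕ) : Fin d × Fin d → ℂ :=
  fun p => if p.1 = p.2 then ((1 / Real.sqrt d : ℝ) : ℂ) else 0

/-- Separability of a bipartite state: membership in the convex hull of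
    product states. -/
def IsSepState {d : ℕ} (M : Matrix (Fin d × Fin d) (Fin d × Fin d) ℂ) : Prop :=
  ∃ (m : ℕ) (c : Fin m → ℝ) (A B : Fin m → Matrix (Fin d) (Fin d) ℂ),
    (∀ i, 0 ≤ c i) ∧ (∑ i, c i = 1) ∧
    (∀ i, (A i).PosSemidef ∧ (A i).trace = 1) ∧
    (∀ i, (B i).PosSemidef ∧ (B i).trace = 1) ∧
    M = ∑ i, ((c i : ℂ)) • ((A i) ⊗ₖ (B i))

/-- A finite convex combination of product states, over any finite index type, is separable. -/
theorem IsSepState.of_fintype {d : ℕ} {ι : Type*} [Fintype ι]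
    {M : Matrix (Fin d × Fin d) (Fin d × Fin d) ℂ}
    (c : ι → ℝ) (A B : ι → Matrix (Fin d) (Fin d) ℂ)
    (hc : ∀ i, 0 ≤ c i) (hsum : ∑ i, c i = 1)
    (hA : ∀ i, (A i).PosSemidef ∧ (A i).trace = 1)
    (hB : ∀ i, (B i).PosSemidef ∧ (B i).trace = 1)
    (hM : M = ∑ i, (c i : ℂ) • (A i ⊗ₖ B i)) : IsSepState M := by
  let e := (Fintype.equivFin ι).symm
  refine ⟨Fintype.card ι, c ∘ e, A ∘ e, B ∘ e, fun i => hc _, ?_, fun i => hA _, fun i => hB _, ?_⟩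
  · rw [← hsum]
    exact e.sum_comp c
  · rw [hM]
    exact (e.sum_comp fun i => (c i : ℂ) • (A i ⊗ₖ B i)).symm

/-- For positive semidefinite `A` and `B`, `Tr (A Bᵀ) ≤ Tr A * Tr B`. -/
theorem Matrix.PosSemidef.re_sum_mul_le_trace_mul_trace {n : Type*} [Fintype n] [DecidableEq n]
    {A B : Matrix n n ℂ} (hA : A.PosSemidef) (hB : B.PosSemidef) :
    (∑ i, ∑ j, A i j * B i j).re ≤ (A.trace * B.trace).re := by
  have key (i j : n) : 0 ≤ A i i * B j j + A j j * B i i - A i j * B i j - A j i * B j i := by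
    have h := (hA.kronecker hB.transpose).dotProduct_mulVec_nonneg
      (Pi.single (i, j) 1 - Pi.single (j, i) 1)
    simp only [star_sub, Pi.star_single, star_one, mulVec_sub, sub_dotProduct, dotProduct_sub,
      single_one_dotProduct, mulVec_single_one, col_apply, kroneckerMap_apply,
      transpose_apply] at h
    convert h using 1
    ring
  have hs : 0 ≤ ∑ i, ∑ j, (A i i * B j j + A j j * B i i - A i j * B i j - A j i * B j i) :=
    Finset.sum_nonneg fun i _ => Finset.sum_nonneg fun j _ => key i j
  have h₁ : ∑ i, ∑ j, A i i * B j j = A.trace * B.trace := by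
    simp [Matrix.trace, Finset.sum_mul_sum]
  have h₂ : ∑ i, ∑ j, A j j * B i i = A.trace * B.trace := by
    rw [Finset.sum_comm, h₁]
  have h₃ : ∑ i, ∑ j, A j i * B j i = ∑ i, ∑ j, A i j * B i j := Finset.sum_comm
  simp only [Finset.sum_sub_distrib, Finset.sum_add_distrib, h₁, h₂, h₃] at hs
  have := (Complex.le_def.1 hs).1
  simp only [Complex.zero_re, Complex.sub_re, Complex.add_re] at this
  linarith

/-- A separable state has overlap at most `1/d` with the maximally entangled state. -/
theorem IsSepState.re_sum_diag_le {d : ℕ} {M : Matrix (Fin d × Fin d) (Fin d × Fin d) ℂ}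
    (hM : IsSepState M) : (∑ i, ∑ j, M (i, i) (j, j)).re ≤ 1 := by
  obtain ⟨m, c, A, B, hc, hsum, hA, hB, rfl⟩ := hM
  have h : ∑ i, ∑ j, (∑ k, (c k : ℂ) • (A k ⊗ₖ B k)) (i, i) (j, j)
      = ∑ k, (c k : ℂ) * ∑ i, ∑ j, A k i j * B k i j := by
    simp only [Matrix.sum_apply, Matrix.smul_apply, kroneckerMap_apply, smul_eq_mul,
      Finset.mul_sum]
    rw [Finset.sum_comm]
    refine (Finset.sum_congr rfl fun j _ => Finset.sum_comm).trans ?_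
    rw [Finset.sum_comm]
    exact Finset.sum_congr rfl fun k _ => Finset.sum_comm
  rw [h, Complex.re_sum, ← hsum]
  refine Finset.sum_le_sum fun k _ => ?_
  rw [Complex.re_ofReal_mul]
  have := (hA k).1.re_sum_mul_le_trace_mul_trace (hB k).1
  rw [(hA k).2, (hB k).2] at this
  exact mul_le_of_le_one_right (hc k) (by simpa using this)

theorem vecMulVec_maxEnt_apply (d : ℕ) (p q : Fin d × Fin d) :
    vecMulVec (maxEnt d) (star (maxEnt d)) p q
      = if p.1 = p.2 ∧ q.1 = q.2 then (1 / d : ℂ) else 0 := by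
  have h : ((√d : ℝ) : ℂ) * ((√d : ℝ) : ℂ) = d := by
    rw [← Complex.ofReal_mul, Real.mul_self_sqrt (Nat.cast_nonneg d), Complex.ofReal_natCast]
  by_cases h₁ : p.1 = p.2 <;> by_cases h₂ : q.1 = q.2 <;>
    simp [vecMulVec_apply, maxEnt, h₁, h₂, ← mul_inv, h]

theorem applyBlocks_depol_maxEnt (d : ℕ) (ε : ℝ) :
    applyBlocks d (depol d ε) (vecMulVec (maxEnt d) (star (maxEnt d)))
      = ((1 - ε : ℝ) : ℂ) • vecMulVec (maxEnt d) (star (maxEnt d)) +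
          ((ε : ℂ) / (d ^ 2 : ℂ)) • 1 := by
  ext ⟨i, k⟩ ⟨j, l⟩
  have htr : (Matrix.of fun a b => vecMulVec (maxEnt d) (star (maxEnt d)) (i, a) (j, b)).trace
      = if i = j then (1 / d : ℂ) else 0 := by
    simp only [Matrix.trace, diag_apply, of_apply, vecMulVec_maxEnt_apply]
    by_cases hij : i = j
    · simp [hij]
    · rw [if_neg hij]
      exact Finset.sum_eq_zero fun x _ => if_neg fun h => hij (h.1.trans h.2.symm)
  simp only [applyBlocks, depol, of_apply, LinearMap.add_apply, LinearMap.smul_apply,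
    LinearMap.id_apply, LinearMap.smulRight_apply, traceLinearMap_apply, htr, Matrix.add_apply,
    Matrix.smul_apply, smul_eq_mul, Matrix.one_apply, Prod.mk.injEq]
  by_cases hij : i = j <;> by_cases hkl : k = l <;> simp [hij, hkl]
  ring

/-- Vectors of fourth roots of unity. -/
abbrev PhaseVector (d : ℕ) : Type := Fin d → rootsOfUnity 4 ℂ

noncomputable instance (d : ℕ) : Fintype (PhaseVector d) :=
  Fintype.ofFinite _

/-- The complex vector underlying a vector of phases. -/
def PhaseVector.toVec {d : ℕ} (z : PhaseVector d) : Fin d → ℂ := fun i => ((z i : ℂˣ) : ℂ)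

theorem PhaseVector.toVec_mul_star {d : ℕ} (z : PhaseVector d) (i : Fin d) :
    z.toVec i * star (z.toVec i) = 1 := by
  have h : ‖z.toVec i‖ = 1 := by
    refine Complex.norm_eq_one_of_pow_eq_one (n := 4) ?_ (by norm_num)
    have := (z i).2
    rw [mem_rootsOfUnity'] at this
    exact this
  rw [Complex.star_def, Complex.mul_conj, Complex.normSq_eq_norm_sq, h]
  simp

theorem PhaseVector.dotProduct_star {d : ℕ} (z : PhaseVector d) :
    z.toVec ⬝ᵥ star z.toVec = d := by
  simp only [dotProduct, Pi.star_apply, z.toVec_mul_star, Finset.sum_const, Finset.card_univ,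
    Fintype.card_fin, nsmul_eq_mul, mul_one]

/-- Multiplying the `a`-th coordinate by `I`. -/
noncomputable def PhaseVector.rotate {d : ℕ} (a : Fin d) : PhaseVector d ≃ PhaseVector d :=
  Equiv.mulLeft (Pi.mulSingle a ⟨Units.mk0 Complex.I Complex.I_ne_zero, by
    rw [mem_rootsOfUnity']; simp⟩)

theorem PhaseVector.toVec_rotate {d : ℕ} (a i : Fin d) (z : PhaseVector d) :
    (rotate a z).toVec i = (if i = a then Complex.I else 1) * z.toVec i := by
  by_cases h : i = a
  · subst h; simp [rotate, toVec]
  · simp [rotate, toVec, h]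

/-- A function of phase vectors that is scaled by `c ≠ 1` under a rotation sums to zero. -/
theorem PhaseVector.sum_eq_zero {d : ℕ} (a : Fin d) (f : PhaseVector d → ℂ) (c : ℂ) (hc : c ≠ 1)
    (h : ∀ z, f (rotate a z) = c * f z) : ∑ z, f z = 0 := by
  have h₁ : ∑ z, f z = c * ∑ z, f z := by
    rw [Finset.mul_sum, ← (rotate a).sum_comp f]
    exact Finset.sum_congr rfl fun z _ => h z
  have h₂ : (1 - c) * ∑ z, f z = 0 := by linear_combination h₁
  exact (mul_eq_zero.1 h₂).resolve_left (sub_ne_zero.2 hc.symm)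

/-- Fourth moments of random phases. -/
theorem PhaseVector.sum_moment {d : ℕ} (i k j l : Fin d) :
    ∑ z : PhaseVector d, z.toVec i * star (z.toVec j) * (star (z.toVec k) * z.toVec l)
      = if (i = j ∧ k = l) ∨ (i = k ∧ j = l) then (Fintype.card (PhaseVector d) : ℂ) else 0 := by
  have hI : Complex.I ≠ 1 := fun h => by simpa using congrArg Complex.re h
  have hn : (-1 : ℂ) ≠ 1 := by norm_num
  split_ifs with h
  · have h1 (z : PhaseVector d) :
        z.toVec i * star (z.toVec j) * (star (z.toVec k) * z.toVec l) = 1 := by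
      rcases h with ⟨rfl, rfl⟩ | ⟨rfl, rfl⟩
      · rw [z.toVec_mul_star, mul_comm, mul_comm (star _), z.toVec_mul_star, mul_one]
      · linear_combination (z.toVec j * star (z.toVec j)) * z.toVec_mul_star i + z.toVec_mul_star j
    simp only [h1, Finset.sum_const, Finset.card_univ, nsmul_eq_mul, mul_one]
  · push Not at h
    by_cases hij : i = j
    · subst hij
      have hkl := h.1 rfl
      have h1 (z : PhaseVector d) :
          z.toVec i * star (z.toVec i) * (star (z.toVec k) * z.toVec l)
            = star (z.toVec k) * z.toVec l := by
        rw [z.toVec_mul_star, one_mul]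
      simp only [h1]
      refine sum_eq_zero l _ Complex.I hI fun z => ?_
      simp only [toVec_rotate, hkl, if_true, if_false, one_mul]
      ring
    by_cases hik : i = k
    · subst hik
      have hjl := h.2 rfl
      have h1 (z : PhaseVector d) :
          z.toVec i * star (z.toVec j) * (star (z.toVec i) * z.toVec l)
            = star (z.toVec j) * z.toVec l := by
        linear_combination (star (z.toVec j) * z.toVec l) * z.toVec_mul_star i
      simp only [h1]
      refine sum_eq_zero l _ Complex.I hI fun z => ?_
      simp only [toVec_rotate, hjl, if_true, if_false, one_mul]
      ring
    by_cases hil : l = i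
    · refine sum_eq_zero i _ (-1) hn fun z => ?_
      simp only [toVec_rotate, Ne.symm hij, Ne.symm hik, hil, if_true, if_false, one_mul]
      linear_combination (z.toVec i * star (z.toVec j) * (star (z.toVec k) * z.toVec i))
        * Complex.I_mul_I
    · refine sum_eq_zero i _ Complex.I hI fun z => ?_
      simp only [toVec_rotate, Ne.symm hij, Ne.symm hik, hil, if_true, if_false, one_mul]
      ring

/-- The isotropic state with weight `t` on the maximally entangled state is separable for
`0 ≤ t ≤ 1/(d+1)`. -/
theorem isSepState_isotropic {d : ℕ} (hd : d ≠ 0) {t : ℝ} (ht : 0 ≤ t) (ht' : t * (d + 1) ≤ 1) :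
    IsSepState ((t : ℂ) • vecMulVec (maxEnt d) (star (maxEnt d)) +
      (((1 - t : ℝ) : ℂ) / (d ^ 2 : ℂ)) • 1) := by
  have hd' : (d : ℂ) ≠ 0 := Nat.cast_ne_zero.2 hd
  have hdR : (d : ℝ) ≠ 0 := Nat.cast_ne_zero.2 hd
  have hN : (Fintype.card (PhaseVector d) : ℝ) ≠ 0 := Nat.cast_ne_zero.2 Fintype.card_ne_zero
  have hNC : (Fintype.card (PhaseVector d) : ℂ) ≠ 0 := Nat.cast_ne_zero.2 Fintype.card_ne_zero
  have hinv : (0 : ℂ) ≤ 1 / d := by simp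
  have hsingle (i : Fin d) : (diagonal (Pi.single i (1 : ℂ))).PosSemidef ∧
      (diagonal (Pi.single i (1 : ℂ))).trace = 1 :=
    ⟨.diagonal (Pi.single_nonneg.2 zero_le_one), by simp [trace_diagonal]⟩
  have hmixed : ((1 / d : ℂ) • (1 : Matrix (Fin d) (Fin d) ℂ)).PosSemidef ∧
      ((1 / d : ℂ) • (1 : Matrix (Fin d) (Fin d) ℂ)).trace = 1 :=
    ⟨PosSemidef.one.smul hinv, by simp [hd']⟩
  refine IsSepState.of_fintype (ι := PhaseVector d ⊕ Fin d ⊕ Unit)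
    (Sum.elim (fun _ => t * d / Fintype.card (PhaseVector d))
      (Sum.elim (fun _ => t / d) fun _ => 1 - t * (d + 1)))
    (Sum.elim (fun z => (1 / d : ℂ) • vecMulVec z.toVec (star z.toVec))
      (Sum.elim (fun i => diagonal (Pi.single i 1)) fun _ => (1 / d : ℂ) • 1))
    (Sum.elim (fun z => (1 / d : ℂ) • vecMulVec (star z.toVec) z.toVec)
      (Sum.elim (fun i => diagonal (Pi.single i 1)) fun _ => (1 / d : ℂ) • 1))
    ?_ ?_ ?_ ?_ ?_
  · rintro (z | i | _)
    · exact div_nonneg (by positivity) (Nat.cast_nonneg _)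
    · exact div_nonneg ht (Nat.cast_nonneg _)
    · exact sub_nonneg.2 ht'
  · simp only [Fintype.sum_sum_type, Sum.elim_inl, Sum.elim_inr, Finset.sum_const,
      Finset.card_univ, nsmul_eq_mul, Fintype.card_fin, Fintype.card_unit]
    rw [mul_div_cancel₀ _ hN, mul_div_cancel₀ _ hdR]
    push_cast
    ring
  · rintro (z | i | _)
    · refine ⟨(posSemidef_vecMulVec_self_star _).smul hinv, ?_⟩
      rw [Sum.elim_inl, trace_smul, trace_vecMulVec, z.dotProduct_star, smul_eq_mul,
        one_div_mul_cancel hd']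
    · exact hsingle i
    · exact hmixed
  · rintro (z | i | _)
    · refine ⟨(posSemidef_vecMulVec_star_self _).smul hinv, ?_⟩
      rw [Sum.elim_inl, trace_smul, trace_vecMulVec, dotProduct_comm, z.dotProduct_star,
        smul_eq_mul, one_div_mul_cancel hd']
    · exact hsingle i
    · exact hmixed
  · ext ⟨i, k⟩ ⟨j, l⟩
    have hphase : ∑ z : PhaseVector d,
        ((t * d / Fintype.card (PhaseVector d) : ℝ) : ℂ) *
          ((1 / d * (z.toVec i * star (z.toVec j))) * (1 / d * (star (z.toVec k) * z.toVec l)))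
        = t / d * if (i = j ∧ k = l) ∨ (i = k ∧ j = l) then 1 else 0 := by
      have h := PhaseVector.sum_moment i k j l
      calc _ = ((t * d / Fintype.card (PhaseVector d) : ℝ) : ℂ) * (1 / d) * (1 / d) *
            ∑ z : PhaseVector d,
              z.toVec i * star (z.toVec j) * (star (z.toVec k) * z.toVec l) := by
            rw [Finset.mul_sum]
            exact Finset.sum_congr rfl fun z _ => by ring
        _ = _ := by
            rw [h]
            push_cast
            split_ifs
            · field_simp
            · simp
    have hdiag : ∑ x : Fin d, ((t / d : ℝ) : ℂ) *
        (diagonal (Pi.single x (1 : ℂ)) i j * diagonal (Pi.single x (1 : ℂ)) k l)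
        = t / d * if i = j ∧ k = l ∧ i = k then 1 else 0 := by
      rw [← Finset.mul_sum]
      push_cast
      congr 1
      by_cases hij : i = j <;> by_cases hkl : k = l <;> simp [hij, hkl]
      simp [Pi.single_apply]
    simp only [Fintype.sum_sum_type, Sum.elim_inl, Sum.elim_inr, Matrix.add_apply,
      Matrix.sum_apply, Matrix.smul_apply, kroneckerMap_apply, smul_eq_mul, vecMulVec_apply (star _),
      vecMulVec_apply (PhaseVector.toVec _), Pi.star_apply, hphase, hdiag, vecMulVec_maxEnt_apply,
      Matrix.one_apply, Prod.mk.injEq, Finset.univ_unique, Finset.sum_const, Finset.card_singleton,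
      one_smul]
    push_cast
    by_cases hij : i = j <;> by_cases hkl : k = l <;> by_cases hik : i = k <;>
      by_cases hjl : j = l <;> simp_all <;> field_simp <;> ring

/-- the image of the maximally entangled state under
    `id ⊗ N` for the depolarizing channel `N` is the isotropic state
    `(1−ε)|Ψ⟩⟨Ψ| + ε I/d²`, and this state is separable iff `ε ≥ d/(d+1)`. -/
theorem stmt6 (d : ℕ) (hd : 2 ≤ d) (ε : ℝ) (hε0 : 0 ≤ ε) (hε1 : ε ≤ 1) :
    applyBlocks d (depol d ε)
        (Matrix.vecMulVec (maxEnt d) (star (maxEnt d)))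
      = ((1 - ε : ℝ) : ℂ) • Matrix.vecMulVec (maxEnt d) (star (maxEnt d)) +
          ((ε : ℂ) / (d ^ 2 : ℂ)) • 1 ∧
    (IsSepState
        (((1 - ε : ℝ) : ℂ) • Matrix.vecMulVec (maxEnt d) (star (maxEnt d)) +
          ((ε : ℂ) / (d ^ 2 : ℂ)) • 1)
      ↔ (d : ℝ) / (d + 1) ≤ ε) := by
  have hd0 : d ≠ 0 := by omega
  have hdR : (2 : ℝ) ≤ d := by exact_mod_cast hd
  refine ⟨applyBlocks_depol_maxEnt d ε, fun h => ?_, fun h => ?_⟩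
  · have h₁ := h.re_sum_diag_le
    have h₂ : ∑ i, ∑ j, (((1 - ε : ℝ) : ℂ) • vecMulVec (maxEnt d) (star (maxEnt d)) +
        ((ε : ℂ) / (d ^ 2 : ℂ)) • (1 : Matrix (Fin d × Fin d) (Fin d × Fin d) ℂ)) (i, i) (j, j)
        = (((1 - ε) * d + ε / d : ℝ) : ℂ) := by
      have : (d : ℂ) ≠ 0 := Nat.cast_ne_zero.2 hd0
      simp [vecMulVec_maxEnt_apply, Matrix.one_apply, Finset.sum_add_distrib]
      field_simp
    rw [h₂, Complex.ofReal_re] at h₁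
    have h₃ : (1 - ε) * d * d + ε ≤ d := by
      have := mul_le_mul_of_nonneg_right h₁ (by linarith : (0 : ℝ) ≤ d)
      rwa [add_mul, div_mul_cancel₀ _ (by linarith), one_mul] at this
    rw [div_le_iff₀ (by linarith)]
    nlinarith
  · rw [div_le_iff₀ (by linarith)] at h
    simpa using isSepState_isotropic hd0 (t := 1 - ε) (by linarith) (by linarith)
end

section
/- For a unital qubit channel N with Pauli-diagonal coefficients (d¹,d²,d³) in the small tetrahedron T_μ (containing the vertex E_μ), the 'no measurement' protocol with single correction C = A_{σ_μ} achieves average fidelity 1/2 + (|d¹| + |d²| + |d³|)/6, and this is optimal among all ex-ante/ex-post protocols; if instead (d¹,d²,d³) lies in the octahedron O (i.e., |d¹|+|d²|+|d³| ≤ 1), the discriminate-and-reprepare protocol is optimal with average fidelity 2/3. -/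
open Matrix ComplexOrder

/-- Complete positivity. -/
def IsCP {d : ℕ}
    (Φ : Matrix (Fin d) (Fin d) ℂ →ₗ[ℂ] Matrix (Fin d) (Fin d) ℂ) : Prop :=
  ∀ (n : ℕ) (M : Matrix (Fin n × Fin d) (Fin n × Fin d) ℂ),
    M.PosSemidef → (applyBlocks n Φ M).PosSemidef

/-- Trace preservation. -/
def IsTP {d : ℕ}
    (Φ : Matrix (Fin d) (Fin d) ℂ →ₗ[ℂ] Matrix (Fin d) (Fin d) ℂ) : Prop :=
  ∀ X, (Φ X).trace = X.trace

/-- An ex-ante/ex-post protocol: a CP instrument `{I_ω}` and TPCP maps `C_ω`. -/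
def IsProtocol {d m : ℕ}
    (I C : Fin m → (Matrix (Fin d) (Fin d) ℂ →ₗ[ℂ] Matrix (Fin d) (Fin d) ℂ)) : Prop :=
  (∀ ω, IsCP (I ω)) ∧ (∀ X, ∑ ω, ((I ω) X).trace = X.trace) ∧
    (∀ ω, IsCP (C ω) ∧ IsTP (C ω))

/-- Average fidelity `F̄ = (2 + Σ_ω Tr_HS (C_ω ∘ N ∘ I_ω))/6` for a qubit. -/
noncomputable def avgFid
    (N : Matrix (Fin 2) (Fin 2) ℂ →ₗ[ℂ] Matrix (Fin 2) (Fin 2) ℂ) {m : ℕ}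
    (I C : Fin m → (Matrix (Fin 2) (Fin 2) ℂ →ₗ[ℂ] Matrix (Fin 2) (Fin 2) ℂ)) : ℝ :=
  ((2 : ℝ) + ∑ ω, (LinearMap.trace ℂ (Matrix (Fin 2) (Fin 2) ℂ)
      ((C ω) ∘ₗ N ∘ₗ (I ω))).re) / 6

/-- The Pauli matrices `σ_0 = I, σ_1, σ_2, σ_3`. -/
noncomputable def pauli : Fin 4 → Matrix (Fin 2) (Fin 2) ℂ :=
  ![1, !![0, 1; 1, 0], !![0, -Complex.I; Complex.I, 0], !![1, 0; 0, -1]]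

/-- The unitary conjugation superoperator `A_U(ρ) = U ρ U†`. -/
noncomputable def conjBy {d : ℕ} (U : Matrix (Fin d) (Fin d) ℂ) :
    Matrix (Fin d) (Fin d) ℂ →ₗ[ℂ] Matrix (Fin d) (Fin d) ℂ :=
  (LinearMap.mulLeft ℂ U).comp (LinearMap.mulRight ℂ Uᴴ)

/-- The Pauli channel `N = Σ_μ α^μ A_{σ_μ}`. -/
noncomputable def pauliChannel (α : Fin 4 → ℝ) :
    Matrix (Fin 2) (Fin 2) ℂ →ₗ[ℂ] Matrix (Fin 2) (Fin 2) ℂ :=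
  ∑ μ, ((α μ : ℂ)) • conjBy (pauli μ)

/-- The Pauli-diagonal coordinates `(d¹,d²,d³)` of the Pauli channel. -/
noncomputable def dCoord (α : Fin 4 → ℝ) : Fin 3 → ℝ :=
  ![α 0 + α 1 - α 2 - α 3, α 0 - α 1 + α 2 - α 3, α 0 - α 1 - α 2 + α 3]

/-- The sign vectors of the vertices `E_μ`; `d ∈ T_μ` iff `⟨s_μ, d⟩ ≥ 1`. -/
noncomputable def signE : Fin 4 → (Fin 3 → ℝ) :=
  ![![1,1,1], ![1,-1,-1], ![-1,1,-1], ![-1,-1,1]]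

/-- The spectral projections of `σ_3`. -/
noncomputable def Pk : Fin 2 → Matrix (Fin 2) (Fin 2) ℂ :=
  ![!![1, 0; 0, 0], !![0, 0; 0, 1]]

/-- Discriminate-and-reprepare protocol. -/
noncomputable def drInstr (ω : Fin 2) :
    Matrix (Fin 2) (Fin 2) ℂ →ₗ[ℂ] Matrix (Fin 2) (Fin 2) ℂ :=
  (LinearMap.mulLeft ℂ (Pk ω)).comp (LinearMap.mulRight ℂ (Pk ω))

noncomputable def drCorr (ω : Fin 2) :
    Matrix (Fin 2) (Fin 2) ℂ →ₗ[ℂ] Matrix (Fin 2) (Fin 2) ℂ :=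
  (Matrix.traceLinearMap (Fin 2) ℂ ℂ).smulRight (Pk ω)

/-- The Hilbert–Schmidt trace of a superoperator, in matrix units. -/
lemma trace_superoperator_eq_sum {d : ℕ}
    (Φ : Matrix (Fin d) (Fin d) ℂ →ₗ[ℂ] Matrix (Fin d) (Fin d) ℂ) :
    LinearMap.trace ℂ _ Φ = ∑ i, ∑ j, Φ (Matrix.single i j 1) i j := by
  rw [LinearMap.trace_eq_matrix_trace ℂ (Matrix.stdBasis ℂ (Fin d) (Fin d)), Matrix.trace,
    Fintype.sum_prod_type]
  refine Finset.sum_congr rfl fun i _ => Finset.sum_congr rfl fun j _ => ?_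
  rw [Matrix.diag_apply, LinearMap.toMatrix_apply, Matrix.stdBasis_eq_single]
  rfl

lemma IsCP.comp {d : ℕ} {Φ Ψ : Matrix (Fin d) (Fin d) ℂ →ₗ[ℂ] Matrix (Fin d) (Fin d) ℂ}
    (hΦ : IsCP Φ) (hΨ : IsCP Ψ) : IsCP (Φ ∘ₗ Ψ) :=
  fun n M hM => hΦ n _ (hΨ n M hM)

lemma isCP_conjBy {d : ℕ} (U : Matrix (Fin d) (Fin d) ℂ) : IsCP (conjBy U) := by
  intro n M hM
  have h : applyBlocks n (conjBy U) M =
      (Matrix.kroneckerMap (· * ·) (1 : Matrix (Fin n) (Fin n) ℂ) U) * M *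
        (Matrix.kroneckerMap (· * ·) (1 : Matrix (Fin n) (Fin n) ℂ) U)ᴴ := by
    ext p q
    simp [applyBlocks, conjBy, Matrix.mul_apply, Fintype.sum_prod_type, Matrix.one_apply,
      Finset.sum_mul, Finset.mul_sum, mul_assoc, apply_ite]
    exact Finset.sum_comm
  rw [h]
  exact hM.mul_mul_conjTranspose_same _

lemma IsCP.posSemidef_apply {d : ℕ}
    {Φ : Matrix (Fin d) (Fin d) ℂ →ₗ[ℂ] Matrix (Fin d) (Fin d) ℂ} (hΦ : IsCP Φ)
    {X : Matrix (Fin d) (Fin d) ℂ} (hX : X.PosSemidef) : (Φ X).PosSemidef :=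
  (hΦ 1 _ (hX.submatrix Prod.snd)).submatrix (fun i => ((0 : Fin 1), i))

/-- A completely positive superoperator has nonnegative trace. -/
lemma IsCP.trace_nonneg {d : ℕ}
    {Φ : Matrix (Fin d) (Fin d) ℂ →ₗ[ℂ] Matrix (Fin d) (Fin d) ℂ} (hΦ : IsCP Φ) :
    0 ≤ LinearMap.trace ℂ _ Φ := by
  have h := hΦ d _ (Matrix.posSemidef_vecMulVec_self_star
    (fun p : Fin d × Fin d => if p.1 = p.2 then (1 : ℂ) else 0))
  have h2 := h.dotProduct_mulVec_nonneg (fun p : Fin d × Fin d => if p.1 = p.2 then (1 : ℂ) else 0)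
  have key : ∀ i j : Fin d, (Matrix.of fun a b : Fin d => Matrix.vecMulVec
      (fun p : Fin d × Fin d => if p.1 = p.2 then (1 : ℂ) else 0)
      (star fun p : Fin d × Fin d => if p.1 = p.2 then (1 : ℂ) else 0) (i, a) (j, b)) =
      Matrix.single i j 1 := by
    intro i j
    ext a b
    by_cases hi : i = a <;> by_cases hj : j = b <;>
      simp [Matrix.vecMulVec_apply, hi, hj]
  rw [trace_superoperator_eq_sum]
  convert h2 using 1
  simp [dotProduct, Matrix.mulVec, applyBlocks, key, Fintype.sum_prod_type]

lemma one_sub_posSemidef {X : Matrix (Fin 2) (Fin 2) ℂ} (hX : X.PosSemidef)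
    (h1 : X.trace = 1) : (1 - X).PosSemidef := by
  have h := hX.transpose.mul_mul_conjTranspose_same (!![0, 1; -1, 0] : Matrix (Fin 2) (Fin 2) ℂ)
  rw [Matrix.trace_fin_two] at h1
  suffices heq : 1 - X = !![0, 1; -1, 0] * Xᵀ * (!![0, 1; -1, 0])ᴴ by rwa [heq]
  ext i j
  fin_cases i <;> fin_cases j <;>
    simp [Matrix.mul_apply, Matrix.vecMul, dotProduct, Fin.sum_univ_two] <;>
    linear_combination -h1

lemma trace_projection_mul_nonneg {d : ℕ} {P X : Matrix (Fin d) (Fin d) ℂ}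
    (hP : P * P = P) (hP' : Pᴴ = P) (hX : X.PosSemidef) : 0 ≤ (P * X).trace := by
  have h := (hX.mul_mul_conjTranspose_same P).trace_nonneg
  rwa [hP', Matrix.trace_mul_comm, ← mul_assoc, hP] at h

/-- The measure-and-prepare superoperator `X ↦ Tr(P X) Q`. -/
noncomputable def measurePrepare {d : ℕ} (P Q : Matrix (Fin d) (Fin d) ℂ) :
    Matrix (Fin d) (Fin d) ℂ →ₗ[ℂ] Matrix (Fin d) (Fin d) ℂ :=
  ((Matrix.traceLinearMap (Fin d) ℂ ℂ).comp (LinearMap.mulLeft ℂ P)).smulRight Q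

lemma trace_comp_measurePrepare {d : ℕ} (P Q : Matrix (Fin d) (Fin d) ℂ)
    (C I : Matrix (Fin d) (Fin d) ℂ →ₗ[ℂ] Matrix (Fin d) (Fin d) ℂ) :
    LinearMap.trace ℂ _ (C ∘ₗ measurePrepare P Q ∘ₗ I) = (P * I (C Q)).trace := by
  have h : C ∘ₗ measurePrepare P Q ∘ₗ I =
      (((Matrix.traceLinearMap (Fin d) ℂ ℂ).comp (LinearMap.mulLeft ℂ P)).comp I).smulRight
        (C Q) := by
    ext1 X
    simp [measurePrepare]
  rw [h, LinearMap.trace_smulRight]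
  rfl

/-- The orthogonal projections onto the eigenvectors of a Pauli matrix. -/
noncomputable def pauliProj (k : Fin 4) : Fin 2 → Matrix (Fin 2) (Fin 2) ℂ :=
  ![(1 / 2 : ℂ) • (1 + pauli k), (1 / 2 : ℂ) • (1 - pauli k)]

lemma pauliProj_mul_self {k : Fin 4} (j : Fin 2) :
    pauliProj k j * pauliProj k j = pauliProj k j := by
  fin_cases k <;> fin_cases j <;> ext a b <;> fin_cases a <;> fin_cases b <;>
    simp [pauliProj, pauli, Matrix.mul_apply, Fin.sum_univ_two] <;> ring_nf <;>
    norm_num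

lemma pauliProj_conjTranspose {k : Fin 4} (j : Fin 2) : (pauliProj k j)ᴴ = pauliProj k j := by
  fin_cases k <;> fin_cases j <;> ext a b <;> fin_cases a <;> fin_cases b <;>
    simp [pauliProj, pauli]

lemma pauliProj_trace {k : Fin 4} (hk : k ≠ 0) (j : Fin 2) : (pauliProj k j).trace = 1 := by
  fin_cases k <;> fin_cases j <;>
    simp [pauliProj, pauli, Matrix.trace_fin_two] at hk ⊢

lemma pauliProj_add (k : Fin 4) : pauliProj k 0 + pauliProj k 1 = 1 := by
  simp only [pauliProj, Matrix.cons_val_zero, Matrix.cons_val_one, ← smul_add]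
  rw [add_add_sub_cancel, ← two_smul ℂ, smul_smul]
  norm_num

/-- The sum of two distinct Pauli conjugations measures in a Pauli eigenbasis and reprepares. -/
lemma exists_conjBy_add_conjBy {μ ν : Fin 4} (h : μ < ν) :
    ∃ k : Fin 4, k ≠ 0 ∧ ∃ f : Fin 2 → Fin 2, conjBy (pauli μ) + conjBy (pauli ν) =
      (2 : ℂ) • ∑ j, measurePrepare (pauliProj k j) (pauliProj k (f j)) := by
  have key : ∀ k (f : Fin 2 → Fin 2), (∀ X : Matrix (Fin 2) (Fin 2) ℂ, ∀ a b : Fin 2,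
      (pauli μ * (X * (pauli μ)ᴴ)) a b + (pauli ν * (X * (pauli ν)ᴴ)) a b = 2 * ∑ j,
        (pauliProj k j * X).trace * pauliProj k (f j) a b) →
      conjBy (pauli μ) + conjBy (pauli ν) =
      (2 : ℂ) • ∑ j, measurePrepare (pauliProj k j) (pauliProj k (f j)) := by
    intro k f hX
    refine LinearMap.ext fun X => ?_
    ext a b
    simpa [conjBy, measurePrepare, Fin.sum_univ_two, mul_add] using hX X a b
  fin_cases μ <;> fin_cases ν <;> first | (exact absurd h (by decide)) | skip
  on_goal 1 => refine ⟨1, by decide, ![0, 1], key _ _ ?_⟩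
  on_goal 2 => refine ⟨2, by decide, ![0, 1], key _ _ ?_⟩
  on_goal 3 => refine ⟨3, by decide, ![0, 1], key _ _ ?_⟩
  on_goal 4 => refine ⟨3, by decide, ![1, 0], key _ _ ?_⟩
  on_goal 5 => refine ⟨2, by decide, ![1, 0], key _ _ ?_⟩
  on_goal 6 => refine ⟨1, by decide, ![1, 0], key _ _ ?_⟩
  all_goals
    intro X a b
    fin_cases a <;> fin_cases b <;>
      simp [pauli, pauliProj, Matrix.mul_apply, Matrix.trace_fin_two, Fin.sum_univ_two,
        Matrix.one_apply] <;> ring_nf <;> simp <;> ring_nf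

/-- The trace of a protocol around the Pauli conjugation by `σ_μ`. -/
noncomputable def protocolTrace {m : ℕ}
    (I C : Fin m → (Matrix (Fin 2) (Fin 2) ℂ →ₗ[ℂ] Matrix (Fin 2) (Fin 2) ℂ)) (μ : Fin 4) : ℝ :=
  ∑ ω, (LinearMap.trace ℂ (Matrix (Fin 2) (Fin 2) ℂ) (C ω ∘ₗ conjBy (pauli μ) ∘ₗ I ω)).re

lemma avgFid_pauliChannel (α : Fin 4 → ℝ) {m : ℕ}
    (I C : Fin m → (Matrix (Fin 2) (Fin 2) ℂ →ₗ[ℂ] Matrix (Fin 2) (Fin 2) ℂ)) :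
    avgFid (pauliChannel α) I C = (2 + ∑ μ, α μ * protocolTrace I C μ) / 6 := by
  simp only [avgFid, protocolTrace, Finset.mul_sum]
  rw [Finset.sum_comm]
  congr 2
  refine Finset.sum_congr rfl fun ω _ => ?_
  simp [pauliChannel, Fin.sum_univ_four, LinearMap.add_comp, LinearMap.comp_add,
    LinearMap.smul_comp, LinearMap.comp_smul]

lemma protocolTrace_nonneg {m : ℕ}
    {I C : Fin m → (Matrix (Fin 2) (Fin 2) ℂ →ₗ[ℂ] Matrix (Fin 2) (Fin 2) ℂ)}
    (h : IsProtocol I C) (μ : Fin 4) : 0 ≤ protocolTrace I C μ :=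
  Finset.sum_nonneg fun ω _ => (Complex.le_def.1
    ((h.2.2 ω).1.comp ((isCP_conjBy _).comp (h.1 ω))).trace_nonneg).1

lemma protocolTrace_add_le_of_lt {m : ℕ}
    {I C : Fin m → (Matrix (Fin 2) (Fin 2) ℂ →ₗ[ℂ] Matrix (Fin 2) (Fin 2) ℂ)}
    (h : IsProtocol I C) {μ ν : Fin 4} (hμν : μ < ν) :
    protocolTrace I C μ + protocolTrace I C ν ≤ 4 := by
  obtain ⟨k, hk, f, hf⟩ := exists_conjBy_add_conjBy hμν
  have hω : ∀ ω,
      (LinearMap.trace ℂ (Matrix (Fin 2) (Fin 2) ℂ) (C ω ∘ₗ conjBy (pauli μ) ∘ₗ I ω)).re +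
      (LinearMap.trace ℂ (Matrix (Fin 2) (Fin 2) ℂ) (C ω ∘ₗ conjBy (pauli ν) ∘ₗ I ω)).re ≤
      2 * ((I ω 1).trace).re := by
    intro ω
    have hsplit : C ω ∘ₗ conjBy (pauli μ) ∘ₗ I ω + C ω ∘ₗ conjBy (pauli ν) ∘ₗ I ω =
        (2 : ℂ) • ∑ j, C ω ∘ₗ measurePrepare (pauliProj k j) (pauliProj k (f j)) ∘ₗ I ω := by
      rw [← LinearMap.comp_add, ← LinearMap.add_comp, hf]
      simp only [Fin.sum_univ_two, LinearMap.add_comp, LinearMap.comp_add, LinearMap.smul_comp,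
        LinearMap.comp_smul]
    have hj : ∀ j, ((pauliProj k j * I ω (C ω (pauliProj k (f j)))).trace).re ≤
        ((pauliProj k j * I ω 1).trace).re := by
      intro j
      have hQ : (pauliProj k (f j)).PosSemidef := by
        have := Matrix.posSemidef_conjTranspose_mul_self (pauliProj k (f j))
        rwa [pauliProj_conjTranspose, pauliProj_mul_self] at this
      have hX := one_sub_posSemidef ((h.2.2 ω).1.posSemidef_apply hQ)
        (((h.2.2 ω).2 _).trans (pauliProj_trace hk _))
      have := (Complex.le_def.1 (trace_projection_mul_nonneg (pauliProj_mul_self (k := k) j)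
        (pauliProj_conjTranspose j) ((h.1 ω).posSemidef_apply hX))).1
      rw [map_sub, mul_sub, Matrix.trace_sub, Complex.sub_re, Complex.zero_re] at this
      linarith
    have hsum : ((pauliProj k 0 * I ω 1).trace).re + ((pauliProj k 1 * I ω 1).trace).re =
        ((I ω 1).trace).re := by
      rw [← Complex.add_re, ← Matrix.trace_add, ← add_mul, pauliProj_add, one_mul]
    rw [← Complex.add_re, ← map_add, hsplit, map_smul, map_sum]
    simp only [trace_comp_measurePrepare, Fin.sum_univ_two, smul_eq_mul, Complex.mul_re,
      Complex.add_re, Complex.re_ofNat, Complex.im_ofNat, zero_mul, sub_zero]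
    linarith [hj 0, hj 1]
  have htot : ∑ ω, ((I ω 1).trace).re = 2 := by
    rw [← Complex.re_sum, h.2.1]
    simp
  calc protocolTrace I C μ + protocolTrace I C ν
      ≤ ∑ ω, 2 * ((I ω 1).trace).re := by
        rw [protocolTrace, protocolTrace, ← Finset.sum_add_distrib]
        exact Finset.sum_le_sum fun ω _ => hω ω
    _ = 4 := by rw [← Finset.mul_sum, htot]; norm_num

lemma protocolTrace_add_le {m : ℕ}
    {I C : Fin m → (Matrix (Fin 2) (Fin 2) ℂ →ₗ[ℂ] Matrix (Fin 2) (Fin 2) ℂ)}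
    (h : IsProtocol I C) {μ ν : Fin 4} (hμν : μ ≠ ν) :
    protocolTrace I C μ + protocolTrace I C ν ≤ 4 := by
  rcases lt_or_gt_of_ne hμν with hlt | hlt
  · exact protocolTrace_add_le_of_lt h hlt
  · rw [add_comm]
    exact protocolTrace_add_le_of_lt h hlt

lemma sum_mul_le_of_add_le {α t : Fin 4 → ℝ} (hα0 : ∀ μ, 0 ≤ α μ) (hα1 : ∑ μ, α μ = 1)
    (ht : ∀ μ ν, μ ≠ ν → t μ + t ν ≤ 4) (μ : Fin 4) :
    ∑ ν, α ν * t ν ≤ (2 * α μ - 1) * t μ + 4 * (1 - α μ) := by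
  have h : ∀ ν ∈ Finset.univ.erase μ, α ν * t ν ≤ α ν * (4 - t μ) := fun ν hν =>
    mul_le_mul_of_nonneg_left (by linarith [ht ν μ (Finset.ne_of_mem_erase hν)]) (hα0 ν)
  have h1 := Finset.sum_le_sum h
  rw [← Finset.sum_mul] at h1
  rw [← Finset.add_sum_erase _ _ (Finset.mem_univ μ)] at hα1 ⊢
  rw [show ∑ ν ∈ Finset.univ.erase μ, α ν = 1 - α μ by linarith] at h1
  linarith

lemma sum_mul_le_of_half_le {α t : Fin 4 → ℝ} (hα0 : ∀ μ, 0 ≤ α μ) (hα1 : ∑ μ, α μ = 1)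
    (ht0 : ∀ μ, 0 ≤ t μ) (ht : ∀ μ ν, μ ≠ ν → t μ + t ν ≤ 4) {μ : Fin 4} (hμ : 1 / 2 ≤ α μ) :
    ∑ ν, α ν * t ν ≤ 4 * α μ := by
  have h := sum_mul_le_of_add_le hα0 hα1 ht μ
  obtain ⟨ν, hν⟩ := exists_ne μ
  have h4 : t μ ≤ 4 := by linarith [ht μ ν hν.symm, ht0 ν]
  nlinarith

lemma sum_mul_le_of_le_half {α t : Fin 4 → ℝ} (hα0 : ∀ μ, 0 ≤ α μ) (hα1 : ∑ μ, α μ = 1)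
    (ht : ∀ μ ν, μ ≠ ν → t μ + t ν ≤ 4) (hα : ∀ μ, α μ ≤ 1 / 2) :
    ∑ ν, α ν * t ν ≤ 2 := by
  by_cases hmax : ∃ μ, 2 ≤ t μ
  · obtain ⟨μ, hμ⟩ := hmax
    have h := sum_mul_le_of_add_le hα0 hα1 ht μ
    nlinarith [hα μ]
  · push Not at hmax
    calc ∑ ν, α ν * t ν ≤ ∑ ν, α ν * 2 :=
          Finset.sum_le_sum fun ν _ => mul_le_mul_of_nonneg_left (hmax ν).le (hα0 ν)
      _ = 2 := by rw [← Finset.sum_mul, hα1, one_mul]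

lemma sum_signE_mul_dCoord {α : Fin 4 → ℝ} (hα1 : ∑ μ, α μ = 1) (μ : Fin 4) :
    ∑ i, signE μ i * dCoord α i = 4 * α μ - 1 := by
  rw [Fin.sum_univ_four] at hα1
  fin_cases μ <;> simp [signE, dCoord, Fin.sum_univ_three] <;> linarith

lemma sum_abs_dCoord {α : Fin 4 → ℝ} (hα0 : ∀ μ, 0 ≤ α μ) (hα1 : ∑ μ, α μ = 1) {μ : Fin 4}
    (hμ : 1 / 2 ≤ α μ) : ∑ i, |dCoord α i| = 4 * α μ - 1 := by
  rw [← sum_signE_mul_dCoord hα1 μ]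
  rw [Fin.sum_univ_four] at hα1
  have h0 := hα0 0
  have h1 := hα0 1
  have h2 := hα0 2
  have h3 := hα0 3
  refine Finset.sum_congr rfl fun i _ => ?_
  fin_cases μ <;> fin_cases i <;> simp [signE, dCoord] at hμ ⊢ <;>
    first
    | linarith
    | (rw [abs_of_nonpos (by linarith)]; ring)

lemma sum_signE_mul_dCoord_le (α : Fin 4 → ℝ) (μ : Fin 4) :
    ∑ i, signE μ i * dCoord α i ≤ ∑ i, |dCoord α i| := by
  refine Finset.sum_le_sum fun i _ => ?_
  have h1 := le_abs_self (dCoord α i)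
  have h2 := neg_le_abs (dCoord α i)
  fin_cases μ <;> fin_cases i <;> simp [signE] at h1 h2 ⊢ <;> assumption

lemma conjBy_comp_conjBy {d : ℕ} (U V : Matrix (Fin d) (Fin d) ℂ) :
    conjBy U ∘ₗ conjBy V = conjBy (U * V) := by
  ext1 X
  simp [conjBy, mul_assoc]

lemma trace_conjBy {d : ℕ} (U : Matrix (Fin d) (Fin d) ℂ) :
    LinearMap.trace ℂ _ (conjBy U) = U.trace * star U.trace := by
  rw [trace_superoperator_eq_sum]
  simp [conjBy, Matrix.mul_apply, Matrix.single_apply, Matrix.trace, Finset.sum_mul_sum, ite_and]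

lemma trace_pauli_mul_pauli (μ ν : Fin 4) :
    (pauli μ * pauli ν).trace = if ν = μ then 2 else 0 := by
  fin_cases μ <;> fin_cases ν <;> simp [pauli, Matrix.trace_fin_two] <;> norm_num

lemma protocolTrace_id_conjBy (μ ν : Fin 4) :
    protocolTrace (fun _ : Fin 1 => LinearMap.id) (fun _ => conjBy (pauli μ)) ν =
      if ν = μ then 4 else 0 := by
  simp only [protocolTrace, LinearMap.comp_id, conjBy_comp_conjBy, trace_conjBy,
    trace_pauli_mul_pauli]
  split_ifs <;> simp
  norm_num

lemma protocolTrace_dr (ν : Fin 4) : protocolTrace drInstr drCorr ν = 2 := by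
  simp only [protocolTrace, trace_superoperator_eq_sum]
  fin_cases ν <;>
    simp [conjBy, pauli, drInstr, drCorr, Pk, Fin.sum_univ_two, Matrix.mul_apply,
      Matrix.single_apply, Matrix.trace_fin_two] <;> norm_num

/-- optimal protocols against a unital (Pauli) qubit channel `N`
    with coordinates `d = (d¹,d²,d³)`.
    (i) If `d` lies in the corner tetrahedron `T_μ` (i.e. `⟨s_μ, d⟩ ≥ 1`), the
    no-measurement protocol with correction `A_{σ_μ}` achieves average fidelity
    `1/2 + (|d¹|+|d²|+|d³|)/6`, optimally among all ex-ante/ex-post protocols.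
    (ii) If `d` lies in the octahedron `O` (i.e. `|d¹|+|d²|+|d³| ≤ 1`), every
    protocol has average fidelity at most `2/3`, and the
    discriminate-and-reprepare protocol attains `2/3`. -/
theorem stmt19 (α : Fin 4 → ℝ) (hα0 : ∀ μ, 0 ≤ α μ) (hα1 : ∑ μ, α μ = 1) :
    (∀ μ : Fin 4, 1 ≤ ∑ i, signE μ i * dCoord α i →
      (avgFid (pauliChannel α)
          (fun _ : Fin 1 => LinearMap.id) (fun _ => conjBy (pauli μ))
        = 1 / 2 + (∑ i, |dCoord α i|) / 6) ∧
      (∀ (m : ℕ)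
          (I C : Fin m → (Matrix (Fin 2) (Fin 2) ℂ →ₗ[ℂ] Matrix (Fin 2) (Fin 2) ℂ)),
        IsProtocol I C →
          avgFid (pauliChannel α) I C ≤ 1 / 2 + (∑ i, |dCoord α i|) / 6)) ∧
    ((∑ i, |dCoord α i|) ≤ 1 →
      (∀ (m : ℕ)
          (I C : Fin m → (Matrix (Fin 2) (Fin 2) ℂ →ₗ[ℂ] Matrix (Fin 2) (Fin 2) ℂ)),
        IsProtocol I C → avgFid (pauliChannel α) I C ≤ 2 / 3) ∧
      avgFid (pauliChannel α) drInstr drCorr = 2 / 3) := by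
  refine ⟨fun μ hμ => ?_, fun hO => ⟨fun m I C h => ?_, ?_⟩⟩
  · have hhalf : 1 / 2 ≤ α μ := by
      rw [sum_signE_mul_dCoord hα1] at hμ
      linarith
    rw [sum_abs_dCoord hα0 hα1 hhalf]
    refine ⟨?_, fun m I C h => ?_⟩
    · rw [avgFid_pauliChannel]
      simp only [protocolTrace_id_conjBy, mul_ite, mul_zero, Finset.sum_ite_eq',
        Finset.mem_univ, if_true]
      ring
    · rw [avgFid_pauliChannel]
      linarith [sum_mul_le_of_half_le hα0 hα1 (protocolTrace_nonneg h)
        (fun _ _ => protocolTrace_add_le h) hhalf]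
  · rw [avgFid_pauliChannel]
    have hle : ∀ μ, α μ ≤ 1 / 2 := fun μ => by
      linarith [sum_signE_mul_dCoord_le α μ, sum_signE_mul_dCoord hα1 μ]
    linarith [sum_mul_le_of_le_half hα0 hα1 (fun _ _ => protocolTrace_add_le h) hle]
  · rw [avgFid_pauliChannel]
    simp only [protocolTrace_dr]
    rw [← Finset.sum_mul, hα1]
    norm_num
end
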